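/- arXiv:2605.03839 — 5 statements merged into one kernel-verified Lean document; each statement's English description precedes it below -/
import Mathlib

section
/- Fix integers q ≥ 1 and k₁, k₂ ≥ 1, and a finite index set I of coordinates containing a distinguished coordinate j. For each s ∈ [k₁] and i ∈ I let P_i^(s) be a distribution on [q], and for each t ∈ [k₂] and i ∈ I let Q_i^(t) be a distribution on [q]; let ᾱ and β̄ be mixing weights on [k₁] and [k₂] respectively. Let K = #{s : ᾱ^(s) > 0} + #{t : β̄^(t) > 0}. Fix c ∈ [q] and set ℓ = min{ min_{s: ᾱ^(s)>0} P_j^(s)(c), min_{t: β̄^(t)>0} Q_j^(t)(c) }, P̄_j(c) = Σ_s ᾱ^(s) P_j^(s)(c), Q̄_j(c) = Σ_t β̄^(t) Q_j^(t)(c). Assume min{P̄_j(c), Q̄_j(c)} > ℓ, and define reweighted vectors ᾱ_c^(s) = ᾱ^(s)(P_j^(s)(c) − ℓ)/(P̄_j(c) − ℓ) and β̄_c^(t) = β̄^(t)(Q_j^(t)(c) − ℓ)/(Q̄_j(c) − ℓ). Let δ = max over subsets Λ ⊆ I with |Λ| ≤ K − 1 and assignments ω ∈ [q]^Λ of | Σ_s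 ᾱ^(s) ∏_{i∈Λ} P_i^(s)(ω_i) − Σ_t β̄^(t) ∏_{i∈Λ} Q_i^(t)(ω_i) |. Then for every subset Λ' ⊆ I \ {j} with |Λ'| ≤ K − 2 and every ω' ∈ [q]^{Λ'}: (min{P̄_j(c), Q̄_j(c)} − ℓ) · | Σ_s ᾱ_c^(s) ∏_{i∈Λ'} P_i^(s)(ω'_i) − Σ_t β̄_c^(t) ∏_{i∈Λ'} Q_i^(t)(ω'_i) | ≤ 3 δ. -/
open Finset

/-- Tilting mixing weights by `x - ℓ`, with `ℓ` a lower bound of `x` on the active components,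
and averaging a `[0, 1]`-valued function gives a value between `0` and the total tilted mass. -/
lemma sum_tilted_mem_Icc {κ : Type*} [Fintype κ] (w x f : κ → ℝ) (ℓ : ℝ)
    (hw0 : ∀ s, 0 ≤ w s) (hw1 : ∑ s, w s = 1) (hx : ∀ s, 0 < w s → ℓ ≤ x s)
    (hf0 : ∀ s, 0 ≤ f s) (hf1 : ∀ s, f s ≤ 1) :
    ∑ s, w s * (x s - ℓ) * f s ∈ Set.Icc 0 ((∑ s, w s * x s) - ℓ) := by
  have hnn : ∀ s, 0 ≤ w s * (x s - ℓ) := fun s => by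
    rcases (hw0 s).eq_or_lt with h | h
    · simp [← h]
    · exact mul_nonneg h.le (sub_nonneg.2 (hx s h))
  refine ⟨Finset.sum_nonneg fun s _ => mul_nonneg (hnn s) (hf0 s), ?_⟩
  calc ∑ s, w s * (x s - ℓ) * f s
      ≤ ∑ s, w s * (x s - ℓ) := Finset.sum_le_sum fun s _ => mul_le_of_le_one_right (hnn s) (hf1 s)
    _ = (∑ s, w s * x s) - ℓ := by
      simp only [mul_sub, Finset.sum_sub_distrib, ← Finset.sum_mul, hw1, one_mul]

/-- Stability of a ratio `B / b ∈ [0, 1]` under perturbation of numerator and denominator,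
scaled by the other denominator. -/
lemma mul_abs_div_sub_div_le {a b A B : ℝ} (ha : 0 < a) (hb : 0 < b) (hB : B ∈ Set.Icc 0 b) :
    a * |A / a - B / b| ≤ |A - B| + |a - b| := by
  have h : a * (A / a - B / b) = (A - B) - B / b * (a - b) := by field_simp; ring
  have hBb : |B / b| ≤ 1 := by
    rw [abs_of_nonneg (div_nonneg hB.1 hb.le)]
    exact (div_le_one hb).2 hB.2
  calc a * |A / a - B / b| = |(A - B) - B / b * (a - b)| := by
        rw [← h, abs_mul, abs_of_pos ha]
    _ ≤ |A - B| + |B / b * (a - b)| := abs_sub _ _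
    _ ≤ |A - B| + |a - b| := by
        rw [abs_mul]
        gcongr
        exact mul_le_of_le_one_left (abs_nonneg _) hBb

lemma min_mul_abs_div_sub_div_le {a b A B : ℝ} (ha : 0 < a) (hb : 0 < b)
    (hA : A ∈ Set.Icc 0 a) (hB : B ∈ Set.Icc 0 b) :
    min a b * |A / a - B / b| ≤ |A - B| + |a - b| := by
  rcases le_total a b with h | h
  · rw [min_eq_left h]
    exact mul_abs_div_sub_div_le ha hb hB
  · rw [min_eq_right h, abs_sub_comm (A / a), abs_sub_comm A, abs_sub_comm a]
    exact mul_abs_div_sub_div_le hb ha hA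

/-- the key inequality `(min{P̄_j(c), Q̄_j(c)} − ℓ) · |mixture difference of the
reweighted mixtures on Λ'| ≤ 3δ`, where `ℓ` is the minimum of the coordinate-`j` marginal
probabilities of `c` over the active components, `δ` bounds the mixture discrepancy over all
subsets `Λ` of coordinates with `|Λ| ≤ K − 1` (with `K` the number of active components), and
`Λ' ⊆ I \ {j}` has `|Λ'| ≤ K − 2`. -/
theorem reweighted_discrepancy_bound {ι : Type*} [Fintype ι] [DecidableEq ι]
    (q k₁ k₂ : ℕ) (j : ι)
    (P : Fin k₁ → ι → Fin q → ℝ) (Q : Fin k₂ → ι → Fin q → ℝ)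
    (hP0 : ∀ s i c, 0 ≤ P s i c) (hP1 : ∀ s i, ∑ c, P s i c = 1)
    (hQ0 : ∀ t i c, 0 ≤ Q t i c) (hQ1 : ∀ t i, ∑ c, Q t i c = 1)
    (α : Fin k₁ → ℝ) (β : Fin k₂ → ℝ)
    (hα0 : ∀ s, 0 ≤ α s) (hα1 : ∑ s, α s = 1)
    (hβ0 : ∀ t, 0 ≤ β t) (hβ1 : ∑ t, β t = 1)
    (hA : (Finset.univ.filter (fun s => 0 < α s)).Nonempty)
    (hB : (Finset.univ.filter (fun t => 0 < β t)).Nonempty)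
    (c : Fin q) (ℓ : ℝ)
    (hℓ : ℓ = min ((Finset.univ.filter (fun s => 0 < α s)).inf' hA (fun s => P s j c))
                 ((Finset.univ.filter (fun t => 0 < β t)).inf' hB (fun t => Q t j c)))
    (hmin : ℓ < min (∑ s, α s * P s j c) (∑ t, β t * Q t j c))
    (δ : ℝ)
    (hδ : ∀ Λ : Finset ι,
      Λ.card ≤ (Finset.univ.filter (fun s => 0 < α s)).card
                 + (Finset.univ.filter (fun t => 0 < β t)).card - 1 →
      ∀ ω : ι → Fin q,
        |(∑ s, α s * ∏ i ∈ Λ, P s i (ω i)) - ∑ t, β t * ∏ i ∈ Λ, Q t i (ω i)| ≤ δ)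
    (Λ' : Finset ι) (hjΛ' : j ∉ Λ')
    (hcard : Λ'.card ≤ (Finset.univ.filter (fun s => 0 < α s)).card
                         + (Finset.univ.filter (fun t => 0 < β t)).card - 2)
    (ω' : ι → Fin q) :
    (min (∑ s, α s * P s j c) (∑ t, β t * Q t j c) - ℓ) *
      |(∑ s, (α s * (P s j c - ℓ) / ((∑ s', α s' * P s' j c) - ℓ)) * ∏ i ∈ Λ', P s i (ω' i))
        - ∑ t, (β t * (Q t j c - ℓ) / ((∑ t', β t' * Q t' j c) - ℓ)) * ∏ i ∈ Λ', Q t i (ω' i)|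
      ≤ 3 * δ := by
  have hPle : ∀ s i d, P s i d ≤ 1 := fun s i d =>
    hP1 s i ▸ Finset.single_le_sum (fun e _ => hP0 s i e) (Finset.mem_univ d)
  have hQle : ∀ t i d, Q t i d ≤ 1 := fun t i d =>
    hQ1 t i ▸ Finset.single_le_sum (fun e _ => hQ0 t i e) (Finset.mem_univ d)
  have hℓP : ∀ s, 0 < α s → ℓ ≤ P s j c := fun s hs => hℓ ▸ (min_le_left _ _).trans
    (Finset.inf'_le _ (Finset.mem_filter.2 ⟨Finset.mem_univ s, hs⟩))
  have hℓQ : ∀ t, 0 < β t → ℓ ≤ Q t j c := fun t ht => hℓ ▸ (min_le_right _ _).trans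
    (Finset.inf'_le _ (Finset.mem_filter.2 ⟨Finset.mem_univ t, ht⟩))
  have hℓ0 : 0 ≤ ℓ := hℓ ▸ le_min (Finset.le_inf' _ _ fun s _ => hP0 s j c)
    (Finset.le_inf' _ _ fun t _ => hQ0 t j c)
  have hℓ1 : ℓ ≤ 1 := by
    obtain ⟨s, hs⟩ := hA
    exact (hℓP s (Finset.mem_filter.1 hs).2).trans (hPle s j c)
  have hApos := hA.card_pos
  have hBpos := hB.card_pos
  have hΛ := hδ Λ' (by omega) ω'
  have hj := hδ {j} (by rw [Finset.card_singleton]; omega) fun _ => c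
  have hjΛ := hδ (insert j Λ') (by rw [Finset.card_insert_of_notMem hjΛ']; omega)
    (Function.update ω' j c)
  have hupdate : ∀ f : ι → Fin q → ℝ, ∏ i ∈ insert j Λ', f i (Function.update ω' j c i) =
      f j c * ∏ i ∈ Λ', f i (ω' i) := fun f => by
    rw [Finset.prod_insert hjΛ', Function.update_self]
    congr 1
    refine Finset.prod_congr rfl fun i hi => ?_
    rw [Function.update_of_ne (ne_of_mem_of_not_mem hi hjΛ')]
  simp only [hupdate] at hjΛ
  simp only [Finset.prod_singleton] at hj
  have hAmem := sum_tilted_mem_Icc α (fun s => P s j c) (fun s => ∏ i ∈ Λ', P s i (ω' i)) ℓ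
    hα0 hα1 hℓP (fun s => Finset.prod_nonneg fun i _ => hP0 s i _)
    (fun s => Finset.prod_le_one (fun i _ => hP0 s i _) fun i _ => hPle s i _)
  have hBmem := sum_tilted_mem_Icc β (fun t => Q t j c) (fun t => ∏ i ∈ Λ', Q t i (ω' i)) ℓ
    hβ0 hβ1 hℓQ (fun t => Finset.prod_nonneg fun i _ => hQ0 t i _)
    (fun t => Finset.prod_le_one (fun i _ => hQ0 t i _) fun i _ => hQle t i _)
  have hratio := min_mul_abs_div_sub_div_le (sub_pos.2 (lt_min_iff.1 hmin).1)
    (sub_pos.2 (lt_min_iff.1 hmin).2) hAmem hBmem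
  have hnum : |(∑ s, α s * (P s j c - ℓ) * ∏ i ∈ Λ', P s i (ω' i))
      - ∑ t, β t * (Q t j c - ℓ) * ∏ i ∈ Λ', Q t i (ω' i)| ≤ 2 * δ := by
    have hsplit : ∀ {κ : Type} [Fintype κ] (w x f : κ → ℝ), ∑ s, w s * (x s - ℓ) * f s =
        (∑ s, w s * (x s * f s)) - ℓ * ∑ s, w s * f s := fun w x f => by
      rw [Finset.mul_sum, ← Finset.sum_sub_distrib]
      exact Finset.sum_congr rfl fun s _ => by ring
    rw [hsplit, hsplit, sub_sub_sub_comm, ← mul_sub]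
    refine (abs_sub _ _).trans ?_
    rw [abs_mul, abs_of_nonneg hℓ0]
    linarith [(mul_le_of_le_one_left (abs_nonneg _) hℓ1).trans hΛ]
  rw [sub_sub_sub_cancel_right, min_sub_sub_right] at hratio
  simp only [div_mul_eq_mul_div, ← Finset.sum_div]
  linarith
end

section
/- Fix integers q ≥ 1 and k₁, k₂ ≥ 1 and a coordinate j. For each s ∈ [k₁] let P_j^(s) be a distribution on [q], and for each t ∈ [k₂] let Q_j^(t) be a distribution on [q]; let ᾱ and β̄ be mixing weights on [k₁] and [k₂]. Fix c ∈ [q] and set ℓ = min{ min_{s: ᾱ^(s)>0} P_j^(s)(c), min_{t: β̄^(t)>0} Q_j^(t)(c) }, P̄_j(c) = Σ_s ᾱ^(s) P_j^(s)(c), Q̄_j(c) = Σ_t β̄^(t) Q_j^(t)(c). Assume min{P̄_j(c), Q̄_j(c)} > ℓ, and define ᾱ_c^(s) = ᾱ^(s)(P_j^(s)(c) − ℓ)/(P̄_j(c) − ℓ) and β̄_c^(t) = β̄^(t)(Q_j^(t)(c) − ℓ)/(Q̄_j(c) − ℓ). Then the number of positive entries strictly decreases: #{s : ᾱ_c^(s)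 > 0} + #{t : β̄_c^(t) > 0} ≤ #{s : ᾱ^(s) > 0} + #{t : β̄^(t) > 0} − 1. -/
open Finset

/-- Rescaling nonnegative weights pointwise cannot create new positive entries. -/
lemma filter_pos_reweight_subset {ι : Type*} [Fintype ι] {w : ι → ℝ} (hw : ∀ i, 0 ≤ w i)
    (f : ι → ℝ) (ℓ d : ℝ) :
    (Finset.univ.filter fun i => 0 < w i * (f i - ℓ) / d) ⊆
      Finset.univ.filter fun i => 0 < w i := by
  intro i hi
  simp only [Finset.mem_filter, Finset.mem_univ, true_and] at hi ⊢
  refine (hw i).lt_of_ne fun h => ?_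
  simp [← h] at hi

/-- If the subtracted level is attained at a positive weight, reweighting loses a positive entry. -/
lemma card_filter_pos_reweight_lt {ι : Type*} [Fintype ι] {w : ι → ℝ} (hw : ∀ i, 0 ≤ w i)
    (f : ι → ℝ) (ℓ d : ℝ) {i : ι} (hi : 0 < w i) (hf : f i = ℓ) :
    (Finset.univ.filter fun i => 0 < w i * (f i - ℓ) / d).card <
      (Finset.univ.filter fun i => 0 < w i).card := by
  refine Finset.card_lt_card ((Finset.ssubset_iff_of_subset
    (filter_pos_reweight_subset hw f ℓ d)).2 ⟨i, ?_, ?_⟩)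
  · simpa using hi
  · simp [hf]

/-- after reweighting by the extracted common part `ℓ` (the minimum of the
coordinate marginals of `c` over active components), the total number of active mixture
components strictly decreases. -/
theorem active_component_count_decreases (q k₁ k₂ : ℕ)
    (P : Fin k₁ → Fin q → ℝ) (Q : Fin k₂ → Fin q → ℝ)
    (hP0 : ∀ s c, 0 ≤ P s c) (hP1 : ∀ s, ∑ c, P s c = 1)
    (hQ0 : ∀ t c, 0 ≤ Q t c) (hQ1 : ∀ t, ∑ c, Q t c = 1)
    (α : Fin k₁ → ℝ) (β : Fin k₂ → ℝ)
    (hα0 : ∀ s, 0 ≤ α s) (hα1 : ∑ s, α s = 1)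
    (hβ0 : ∀ t, 0 ≤ β t) (hβ1 : ∑ t, β t = 1)
    (hA : (Finset.univ.filter (fun s => 0 < α s)).Nonempty)
    (hB : (Finset.univ.filter (fun t => 0 < β t)).Nonempty)
    (c : Fin q) (ℓ : ℝ)
    (hℓ : ℓ = min ((Finset.univ.filter (fun s => 0 < α s)).inf' hA (fun s => P s c))
                 ((Finset.univ.filter (fun t => 0 < β t)).inf' hB (fun t => Q t c)))
    (hmin : ℓ < min (∑ s, α s * P s c) (∑ t, β t * Q t c)) :
    (Finset.univ.filter
        (fun s => 0 < α s * (P s c - ℓ) / ((∑ s', α s' * P s' c) - ℓ))).card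
      + (Finset.univ.filter
        (fun t => 0 < β t * (Q t c - ℓ) / ((∑ t', β t' * Q t' c) - ℓ))).card
      ≤ (Finset.univ.filter (fun s => 0 < α s)).card
          + (Finset.univ.filter (fun t => 0 < β t)).card - 1 := by
  have hαle := Finset.card_le_card
    (filter_pos_reweight_subset hα0 (fun s => P s c) ℓ ((∑ s', α s' * P s' c) - ℓ))
  have hβle := Finset.card_le_card
    (filter_pos_reweight_subset hβ0 (fun t => Q t c) ℓ ((∑ t', β t' * Q t' c) - ℓ))
  rcases min_choice ((Finset.univ.filter (fun s => 0 < α s)).inf' hA (fun s => P s c))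
    ((Finset.univ.filter (fun t => 0 < β t)).inf' hB (fun t => Q t c)) with h | h
  · obtain ⟨s, hs, hPs⟩ := Finset.exists_mem_eq_inf' hA (fun s => P s c)
    have hlt := card_filter_pos_reweight_lt hα0 (fun s => P s c) ℓ
      ((∑ s', α s' * P s' c) - ℓ) (Finset.mem_filter.1 hs).2 (by rw [hℓ, h, hPs])
    omega
  · obtain ⟨t, ht, hQt⟩ := Finset.exists_mem_eq_inf' hB (fun t => Q t c)
    have hlt := card_filter_pos_reweight_lt hβ0 (fun t => Q t c) ℓ
      ((∑ t', β t' * Q t' c) - ℓ) (Finset.mem_filter.1 ht).2 (by rw [hℓ, h, hQt])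
    omega
end

section
/- For all integers n ≥ 0, q ≥ 1, and K ≥ 2: Σ_{j=1}^{n+1} Σ_{r=0}^{K−2} C(j−1, r) · q^r ≤ (nq + 1)^{K−1}, where C(·,·) denotes the binomial coefficient. -/
/-- The hockey-stick identity, summed over an initial range. -/
lemma sum_range_choose_eq_choose_succ (n r : ℕ) :
    ∑ j ∈ Finset.range n, j.choose r = n.choose (r + 1) := by
  induction n with
  | zero => simp
  | succ n ih => rw [Finset.sum_range_succ, ih, Nat.choose_succ_succ', add_comm]

lemma choose_succ_add_two_le_pow (n m : ℕ) : (n + 1).choose (m + 2) ≤ n ^ (m + 2) := by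
  induction m with
  | zero =>
    have h := Nat.choose_succ_right_eq (n + 1) 1
    simp only [Nat.choose_one_right, Nat.add_sub_cancel] at h
    rcases Nat.eq_zero_or_pos n with rfl | hn
    · simp
    · simp only [zero_add]
      nlinarith
  | succ m ih =>
    have h := Nat.choose_succ_right_eq (n + 1) (m + 2)
    calc (n + 1).choose (m + 1 + 2)
        ≤ (n + 1).choose (m + 2 + 1) * (m + 2 + 1) := Nat.le_mul_of_pos_right _ (by omega)
      _ = (n + 1).choose (m + 2) * (n + 1 - (m + 2)) := h
      _ ≤ n ^ (m + 2) * n := Nat.mul_le_mul ih (by omega)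
      _ = n ^ (m + 1 + 2) := by ring

lemma sum_choose_succ_mul_pow_le (n q m : ℕ) (hq : 1 ≤ q) :
    ∑ r ∈ Finset.range (m + 1), (n + 1).choose (r + 1) * q ^ r ≤ (n * q + 1) ^ (m + 1) := by
  induction m with
  | zero => simpa using Nat.le_mul_of_pos_right n hq
  | succ m ih =>
    rw [Finset.sum_range_succ]
    have h : (n + 1).choose (m + 1 + 1) * q ^ (m + 1) ≤ (n * q + 1) ^ (m + 1) * (n * q) :=
      calc (n + 1).choose (m + 1 + 1) * q ^ (m + 1)
          ≤ n ^ (m + 2) * q ^ (m + 2) :=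
            Nat.mul_le_mul (choose_succ_add_two_le_pow n m) (Nat.pow_le_pow_right hq (by omega))
        _ = (n * q) ^ (m + 1) * (n * q) := by ring
        _ ≤ (n * q + 1) ^ (m + 1) * (n * q) := by gcongr; omega
    calc _ ≤ (n * q + 1) ^ (m + 1) + (n * q + 1) ^ (m + 1) * (n * q) := Nat.add_le_add ih h
      _ = (n * q + 1) ^ (m + 1 + 1) := by ring

/-- the state-counting inequality
`Σ_{j=1}^{n+1} Σ_{r=0}^{K−2} C(j−1, r) q^r ≤ (nq+1)^(K−1)` for `q ≥ 1`, `K ≥ 2`.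
(Here the outer sum is reindexed as `j' = j − 1` ranging over `0, …, n`.) -/
theorem state_count_bound (n q K : ℕ) (hq : 1 ≤ q) (hK : 2 ≤ K) :
    ∑ j ∈ Finset.range (n + 1), ∑ r ∈ Finset.range (K - 1), Nat.choose j r * q ^ r
      ≤ (n * q + 1) ^ (K - 1) := by
  obtain ⟨m, rfl⟩ := Nat.exists_eq_add_of_le' hK
  rw [Finset.sum_comm]
  simp only [← Finset.sum_mul, sum_range_choose_eq_choose_succ]
  exact sum_choose_succ_mul_pow_le n q m hq
end

section
/- Let N ≥ 3 and m ≥ 1 be integers and let C₁, …, C_m be 3-clauses over Boolean variables x₁, …, x_N, each involving exactly three distinct variables. For ω ∈ {0,1}^N let F(ω) be the number of clauses falsified by ω, and let S = #{ω ∈ {0,1}^N : F(ω) = 0} be the number of satisfying assignments of C₁ ∧ ⋯ ∧ C_m. Define distributions on {0,1}^{N+1}, whose points are written (b, ω) with b ∈ {0,1} and ω ∈ {0,1}^N: for each j ∈ [m], let U_j be the distribution that puts b = 0 and fixes the three variables of C_j to the unique assignment falsifying C_j, uniform on the other N − 3 coordinates; let V₀ (resp. V₁) fix b = 0 (resp.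 b = 1) and be uniform on ω. Let P = (1/m) Σ_{j=1}^m U_j and Q = (1/(2m)) V₀ + (1 − 1/(2m)) V₁. Then dTV(P, Q) = 1 − 1/(2m) + 2^{−N} S / (2m). -/
open Finset

/-- A subcube of `{0,1}^ι` with coordinates fixed on `T` has `2 ^ (|ι| - |T|)` points. -/
theorem card_filter_forall_mem_eq {ι : Type*} [Fintype ι] [DecidableEq ι] (T : Finset ι)
    (a : ι → Bool) :
    (univ.filter (fun ω : ι → Bool => ∀ i ∈ T, ω i = a i)).card
      = 2 ^ (Fintype.card ι - T.card) := by
  have h : univ.filter (fun ω : ι → Bool => ∀ i ∈ T, ω i = a i)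
      = Fintype.piFinset (fun i => if i ∈ T then {a i} else univ) := by
    ext ω
    simp only [mem_filter, mem_univ, true_and, Fintype.mem_piFinset]
    refine forall_congr' fun i => ?_
    by_cases hi : i ∈ T <;> simp [hi]
  have hc : ∀ i, (if i ∈ T then {a i} else univ : Finset Bool).card = if i ∈ T then 1 else 2 := by
    intro i
    split_ifs <;> simp
  rw [h, Fintype.card_piFinset, Finset.prod_congr rfl fun i _ => hc i, Finset.prod_ite,
    Finset.prod_const_one, one_mul, Finset.prod_const, Finset.filter_not, Finset.filter_mem_eq_inter,
    Finset.univ_inter, ← Finset.compl_eq_univ_sdiff, Finset.card_compl]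

/-- The uniform distribution on a subcube of `{0,1}^ι` has total mass one. -/
theorem sum_subcube_uniform_eq_one {ι : Type*} [Fintype ι] [DecidableEq ι] (T : Finset ι)
    (a : ι → Bool) :
    ∑ ω : ι → Bool,
      (if ∀ i ∈ T, ω i = a i then ((1 : ℝ) / 2) ^ (Fintype.card ι - T.card) else 0) = 1 := by
  rw [← Finset.sum_filter, Finset.sum_const, card_filter_forall_mem_eq, nsmul_eq_mul]
  push_cast
  rw [← mul_pow]
  norm_num

/-- If a sum of indicators, each of weight `c * u ≥ v`, is compared with `v ≥ 0`, the absolute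
difference exceeds the signed one only where every indicator vanishes, and there by `2 * v`. -/
theorem abs_sum_ite_sub {κ : Type*} [Fintype κ] (p : κ → Prop) [DecidablePred p]
    [Decidable (∀ j, ¬ p j)] {c u v : ℝ} (hc : 0 ≤ c) (hv : 0 ≤ v) (hu : 0 ≤ u) (huv : v ≤ c * u) :
    |c * ∑ j, (if p j then u else 0) - v|
      = c * ∑ j, (if p j then u else 0) - v + 2 * v * (if ∀ j, ¬ p j then 1 else 0) := by
  by_cases h : ∀ j, ¬ p j
  · simp only [h, if_false, Finset.sum_const_zero, mul_zero, zero_sub, abs_neg, abs_of_nonneg hv,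
      not_false_eq_true, implies_true, if_true]
    ring
  · rw [if_neg h, mul_zero, add_zero, abs_of_nonneg]
    push Not at h
    obtain ⟨j, hj⟩ := h
    have hle : u ≤ ∑ j, (if p j then u else 0) := by
      have := Finset.single_le_sum (f := fun j => if p j then u else 0)
        (fun i _ => by split_ifs <;> simp [hu]) (Finset.mem_univ j)
      simpa [hj] using this
    linarith [mul_le_mul_of_nonneg_left hle hc]

/-- the exact TV-distance between the mixture `P = (1/m) Σ_j U_j` of the
clause-falsifying subcubes (with an extra bit fixed to `false`) and the mixture
`Q = (1/(2m)) V₀ + (1 − 1/(2m)) V₁`, namely `1 − 1/(2m) + 2^{−N} S/(2m)` where `S` is the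
number of satisfying assignments of the 3-CNF formula. -/
theorem dTV_3sat_reduction (N m : ℕ) (hN : 3 ≤ N) (hm : 1 ≤ m)
    (V : Fin m → Finset (Fin N)) (hV : ∀ j, (V j).card = 3)
    (a : Fin m → Fin N → Bool) :
    (1/2 : ℝ) * ∑ p : Bool × (Fin N → Bool),
        |((1 / (m : ℝ)) * ∑ j,
            (if p.1 = false ∧ ∀ i ∈ V j, p.2 i = a j i then ((1 : ℝ) / 2) ^ (N - 3) else 0))
          - ((1 / (2 * (m : ℝ))) * (if p.1 = false then ((1 : ℝ) / 2) ^ N else 0)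
              + (1 - 1 / (2 * (m : ℝ))) * (if p.1 = true then ((1 : ℝ) / 2) ^ N else 0))|
      = 1 - 1 / (2 * (m : ℝ))
        + ((1 : ℝ) / 2) ^ N
          * ((Finset.univ.filter (fun ω : Fin N → Bool =>
                ∀ j, ¬ (∀ i ∈ V j, ω i = a j i))).card : ℝ) / (2 * (m : ℝ)) := by
  have hm0 : (0 : ℝ) < m := by exact_mod_cast hm
  have hm1 : (1 : ℝ) ≤ m := by exact_mod_cast hm
  have hinv : 1 / (2 * (m : ℝ)) ≤ 1 := by
    rw [div_le_one (by positivity)]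
    linarith
  have hcube : (2 : ℝ) ^ N * (1 / 2) ^ N = 1 := by
    rw [← mul_pow]
    norm_num
  have hU : ∀ j, ∑ ω : Fin N → Bool,
      (if ∀ i ∈ V j, ω i = a j i then ((1 : ℝ) / 2) ^ (N - 3) else 0) = 1 := by
    intro j
    have h := sum_subcube_uniform_eq_one (V j) (a j)
    rw [hV, Fintype.card_fin] at h
    convert h
  have hpow : ((1 : ℝ) / 2) ^ N ≤ (1 / 2) ^ (N - 3) :=
    pow_le_pow_of_le_one (by norm_num) (by norm_num) (Nat.sub_le N 3)
  have hweight : 1 / (2 * (m : ℝ)) * (1 / 2) ^ N ≤ 1 / (m : ℝ) * (1 / 2) ^ (N - 3) := by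
    gcongr
    linarith
  have hfalse : ∑ ω : Fin N → Bool,
      |1 / (m : ℝ) * ∑ j, (if ∀ i ∈ V j, ω i = a j i then ((1 : ℝ) / 2) ^ (N - 3) else 0)
        - 1 / (2 * (m : ℝ)) * (1 / 2) ^ N|
      = 1 - 1 / (2 * (m : ℝ)) + 2 * (1 / (2 * (m : ℝ)) * (1 / 2) ^ N)
        * ((univ.filter (fun ω : Fin N → Bool =>
            ∀ j, ¬ (∀ i ∈ V j, ω i = a j i))).card : ℝ) := by
    rw [Finset.sum_congr rfl fun ω _ =>
      abs_sum_ite_sub (fun j => ∀ i ∈ V j, ω i = a j i) (by positivity) (by positivity)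
        (by positivity) hweight]
    rw [Finset.sum_add_distrib, Finset.sum_sub_distrib, ← Finset.mul_sum, ← Finset.mul_sum,
      ← Finset.mul_sum, Finset.sum_comm, Finset.sum_congr rfl fun j _ => hU j,
      Finset.natCast_card_filter]
    simp only [Finset.sum_const, Finset.card_univ, Fintype.card_fin, Fintype.card_pi,
      Fintype.card_bool, Finset.prod_const, nsmul_eq_mul, mul_one, Nat.cast_pow, Nat.cast_ofNat]
    rw [hcube, one_div_mul_cancel hm0.ne', mul_one]
  have htrue : ∑ _ω : Fin N → Bool, |(1 - 1 / (2 * (m : ℝ))) * (1 / 2) ^ N|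
      = 1 - 1 / (2 * (m : ℝ)) := by
    rw [abs_of_nonneg (mul_nonneg (sub_nonneg.2 hinv) (by positivity))]
    simp only [Finset.sum_const, Finset.card_univ, Fintype.card_fin, Fintype.card_pi,
      Fintype.card_bool, Finset.prod_const, nsmul_eq_mul, Nat.cast_pow, Nat.cast_ofNat]
    rw [mul_left_comm, hcube, mul_one]
  rw [Fintype.sum_prod_type, Fintype.sum_bool]
  simp only [Bool.true_eq_false, Bool.false_eq_true, false_and, true_and, if_false, if_true,
    Finset.sum_const_zero, mul_zero, zero_add, add_zero, zero_sub, abs_neg]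
  rw [hfalse, htrue]
  ring
end

section
/- Let Ω be a finite type, let P and Q be probability distributions on Ω, and let C be a coupling of P and Q with Pr_C[X ≠ Y] > 0 and dTV(P, Q) / Pr_C[X ≠ Y] ≥ γ for some γ > 0. Let Ω₊ = {ω : Pr_C[X = ω ∧ X ≠ Y] > 0}, π(ω) = Pr_C[X = ω ∧ X ≠ Y] / Pr_C[X ≠ Y], and f(ω) = max{0, P(ω) − Q(ω)} / Pr_C[X = ω ∧ X ≠ Y] for ω ∈ Ω₊. Let ε > 0, let m ≥ 100/(γ ε²), let ω₁, …, ω_m be i.i.d. samples from π, and set d̂ = ((1/m) Σ_{i=1}^m f(ω_i)) · Pr_C[X ≠ Y]. Then Pr[ (1 − ε) dTV(P, Q) ≤ d̂ ≤ (1 + ε) dTV(P, Q) ] ≥ 99/100. -/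
open Finset

/-- `Pr_C[X = ω ∧ X ≠ Y]` for a coupling `C`. -/
noncomputable def prEqNe {Ω : Type*} [Fintype Ω] [DecidableEq Ω] (C : Ω → Ω → ℝ) (ω : Ω) : ℝ :=
  ∑ y ∈ Finset.univ.filter (fun y => y ≠ ω), C ω y

/-- `Pr_C[X ≠ Y]` for a coupling `C`. -/
noncomputable def prNe {Ω : Type*} [Fintype Ω] [DecidableEq Ω] (C : Ω → Ω → ℝ) : ℝ :=
  ∑ x, prEqNe C x

/-- Total variation distance between two distributions on a finite type. -/
noncomputable def dTV {Ω : Type*} [Fintype Ω] (P Q : Ω → ℝ) : ℝ :=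
  (1/2) * ∑ ω, |P ω - Q ω|

/-- The estimator `f(ω) = max{0, P ω − Q ω} / Pr_C[X = ω ∧ X ≠ Y]`. -/
noncomputable def estF {Ω : Type*} [Fintype Ω] [DecidableEq Ω]
    (P Q : Ω → ℝ) (C : Ω → Ω → ℝ) (ω : Ω) : ℝ :=
  max 0 (P ω - Q ω) / prEqNe C ω

/-- Sums over product-weighted vectors split off the first coordinate. -/
theorem sum_prod_mul_fin_succ {Ω : Type*} [Fintype Ω] (p : Ω → ℝ) (m : ℕ)
    (F : (Fin (m + 1) → Ω) → ℝ) :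
    ∑ w : Fin (m + 1) → Ω, (∏ i, p (w i)) * F w =
      ∑ a, p a * ∑ w : Fin m → Ω, (∏ i, p (w i)) * F (Fin.cons a w) := by
  rw [← (Fin.consEquiv (fun _ => Ω)).sum_comp, Fintype.sum_prod_type]
  refine Finset.sum_congr rfl fun a _ => ?_
  rw [Finset.mul_sum]
  refine Finset.sum_congr rfl fun w _ => ?_
  simp [Fin.consEquiv, Fin.prod_univ_succ, mul_assoc]

/-- The product weights of a probability vector sum to one. -/
theorem sum_prod_eq_one {Ω : Type*} [Fintype Ω] (p : Ω → ℝ) (hp : ∑ a, p a = 1) (m : ℕ) :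
    ∑ w : Fin m → Ω, ∏ i, p (w i) = 1 := by
  induction m with
  | zero => simp
  | succ m ih => simpa [ih, hp] using sum_prod_mul_fin_succ p m fun _ => 1

/-- A sum of i.i.d. centred variables is centred. -/
theorem sum_prod_mul_sum_eq_zero {Ω : Type*} [Fintype Ω] (p g : Ω → ℝ) (hp : ∑ a, p a = 1)
    (hg : ∑ a, p a * g a = 0) (m : ℕ) :
    ∑ w : Fin m → Ω, (∏ i, p (w i)) * ∑ i, g (w i) = 0 := by
  induction m with
  | zero => simp
  | succ m ih =>
    rw [sum_prod_mul_fin_succ p m fun w => ∑ i, g (w i)]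
    simp only [Fin.sum_univ_succ, Fin.cons_zero, Fin.cons_succ, mul_add, Finset.sum_add_distrib,
      ← Finset.sum_mul, ih, sum_prod_eq_one p hp, one_mul, hg, add_zero]

/-- The variance of a sum of i.i.d. centred variables is additive. -/
theorem sum_prod_mul_sum_sq {Ω : Type*} [Fintype Ω] (p g : Ω → ℝ) (hp : ∑ a, p a = 1)
    (hg : ∑ a, p a * g a = 0) (m : ℕ) :
    ∑ w : Fin m → Ω, (∏ i, p (w i)) * (∑ i, g (w i)) ^ 2 = m * ∑ a, p a * g a ^ 2 := by
  induction m with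
  | zero => simp
  | succ m ih =>
    rw [sum_prod_mul_fin_succ p m fun w => (∑ i, g (w i)) ^ 2]
    have inner_sum (a : Ω) : ∑ w : Fin m → Ω, (∏ i, p (w i)) *
        (∑ i, g ((Fin.cons a w : Fin (m + 1) → Ω) i)) ^ 2 =
          g a ^ 2 + m * ∑ b, p b * g b ^ 2 := by
      have expand (w : Fin m → Ω) : (∏ i, p (w i)) *
          (∑ i, g ((Fin.cons a w : Fin (m + 1) → Ω) i)) ^ 2 =
            (∏ i, p (w i)) * g a ^ 2 + 2 * g a * ((∏ i, p (w i)) * ∑ i, g (w i)) +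
              (∏ i, p (w i)) * (∑ i, g (w i)) ^ 2 := by
        simp only [Fin.sum_univ_succ, Fin.cons_zero, Fin.cons_succ]
        ring
      simp only [expand, Finset.sum_add_distrib, ← Finset.sum_mul, ← Finset.mul_sum, ih,
        sum_prod_eq_one p hp, sum_prod_mul_sum_eq_zero p g hp hg]
      ring
    simp only [inner_sum, mul_add, Finset.sum_add_distrib, ← Finset.sum_mul, hp]
    push_cast
    ring

/-- Chebyshev's inequality for sums of i.i.d. centred variables on a finite type. -/
theorem one_sub_le_sum_filter_prod {Ω : Type*} [Fintype Ω] (p g : Ω → ℝ)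
    (hp0 : ∀ a, 0 ≤ p a) (hp : ∑ a, p a = 1) (hg : ∑ a, p a * g a = 0) (m : ℕ)
    {t : ℝ} (ht : 0 < t) (good : (Fin m → Ω) → Prop) [DecidablePred good]
    (hgood : ∀ w, |∑ i, g (w i)| ≤ t → good w) :
    1 - m * (∑ a, p a * g a ^ 2) / t ^ 2 ≤ ∑ w with good w, ∏ i, p (w i) := by
  rw [← sum_prod_mul_sum_sq p g hp hg m, ← sum_prod_eq_one p hp m, Finset.sum_div,
    ← Finset.sum_sub_distrib, Finset.sum_filter]
  refine Finset.sum_le_sum fun w _ => ?_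
  have hw : 0 ≤ ∏ i, p (w i) := Finset.prod_nonneg fun i _ => hp0 (w i)
  split_ifs with h
  · exact sub_le_self _ (by positivity)
  · have hlt : t < |∑ i, g (w i)| := lt_of_not_ge fun hle => h (hgood w hle)
    have hsq : t ^ 2 ≤ (∑ i, g (w i)) ^ 2 := by
      rw [← sq_abs (∑ i, g (w i))]
      gcongr
    rw [sub_nonpos, le_div_iff₀ (by positivity)]
    gcongr

/-- Total variation distance as a sum of positive parts. -/
theorem dTV_eq_sum_max {Ω : Type*} [Fintype Ω] (P Q : Ω → ℝ) (h : ∑ ω, P ω = ∑ ω, Q ω) :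
    dTV P Q = ∑ ω, max 0 (P ω - Q ω) := by
  have hmax (ω : Ω) : max 0 (P ω - Q ω) = 1 / 2 * |P ω - Q ω| + 1 / 2 * (P ω - Q ω) := by
    rcases le_total 0 (P ω - Q ω) with h | h
    · rw [max_eq_right h, abs_of_nonneg h]; ring
    · rw [max_eq_left h, abs_of_nonpos h]; ring
  simp only [hmax, Finset.sum_add_distrib, ← Finset.mul_sum, Finset.sum_sub_distrib, h, sub_self,
    mul_zero, add_zero, dTV]

theorem prEqNe_nonneg {Ω : Type*} [Fintype Ω] [DecidableEq Ω] {C : Ω → Ω → ℝ}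
    (hC0 : ∀ x y, 0 ≤ C x y) (ω : Ω) : 0 ≤ prEqNe C ω :=
  Finset.sum_nonneg fun y _ => hC0 ω y

/-- Under a coupling of `P` and `Q`, the positive part of `P ω - Q ω` is at most
`Pr[X = ω ∧ X ≠ Y]`. -/
theorem max_sub_le_prEqNe {Ω : Type*} [Fintype Ω] [DecidableEq Ω] {P Q : Ω → ℝ} {C : Ω → Ω → ℝ}
    (hC0 : ∀ x y, 0 ≤ C x y) (hCP : ∀ ω, ∑ y, C ω y = P ω) (hCQ : ∀ ω, ∑ x, C x ω = Q ω)
    (ω : Ω) : max 0 (P ω - Q ω) ≤ prEqNe C ω := by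
  refine max_le (prEqNe_nonneg hC0 ω) ?_
  have hdiag : C ω ω ≤ Q ω := by
    rw [← hCQ ω]
    exact Finset.single_le_sum (fun x _ => hC0 x ω) (Finset.mem_univ ω)
  have hsplit : prEqNe C ω + C ω ω = P ω := by
    rw [← hCP ω, prEqNe, Finset.filter_ne', Finset.sum_erase_add _ _ (Finset.mem_univ ω)]
  linarith

open Classical in
/-- drawing `m ≥ 100/(γ ε²)` i.i.d. samples from
`π(ω) = Pr_C[X = ω ∧ X ≠ Y]/Pr_C[X ≠ Y]` (so a vector of samples `w : Fin m → Ω` has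
probability `Π_i π(w i)`), the estimator `d̂ = (1/m Σ_i f(ω_i)) · Pr_C[X ≠ Y]` is a
relative `(1 ± ε)`-approximation of `dTV(P, Q)` with probability at least `99/100`. -/
theorem monte_carlo_tv_estimator {Ω : Type*} [Fintype Ω] [DecidableEq Ω]
    (P Q : Ω → ℝ) (C : Ω → Ω → ℝ)
    (hP0 : ∀ ω, 0 ≤ P ω) (hP1 : ∑ ω, P ω = 1)
    (hQ0 : ∀ ω, 0 ≤ Q ω) (hQ1 : ∑ ω, Q ω = 1)
    (hC0 : ∀ x y, 0 ≤ C x y)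
    (hCP : ∀ ω, ∑ y, C ω y = P ω)
    (hCQ : ∀ ω, ∑ x, C x ω = Q ω)
    (γ ε : ℝ) (hγ : 0 < γ) (hε : 0 < ε)
    (hpos : 0 < prNe C)
    (hratio : γ ≤ dTV P Q / prNe C)
    (m : ℕ) (hm : 100 / (γ * ε ^ 2) ≤ (m : ℝ)) :
    (99/100 : ℝ) ≤
      ∑ w ∈ Finset.univ.filter (fun w : Fin m → Ω =>
          (1 - ε) * dTV P Q ≤ ((1 / (m : ℝ)) * ∑ i, estF P Q C (w i)) * prNe C
          ∧ ((1 / (m : ℝ)) * ∑ i, estF P Q C (w i)) * prNe C ≤ (1 + ε) * dTV P Q),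
        ∏ i, (prEqNe C (w i) / prNe C) := by
  set N := prNe C
  set d := dTV P Q
  set μ := d / N with hμ
  set f := estF P Q C with hf
  set p : Ω → ℝ := fun ω => prEqNe C ω / N with hpdef
  have hdN : d = μ * N := by rw [hμ]; field_simp
  have hμ0 : 0 < μ := hγ.trans_le hratio
  have hm0 : (0 : ℝ) < m := lt_of_lt_of_le (by positivity) hm
  have hmax := max_sub_le_prEqNe hC0 hCP hCQ
  have hp0 (ω : Ω) : 0 ≤ p ω := div_nonneg (prEqNe_nonneg hC0 ω) hpos.le
  have hp1 : ∑ ω, p ω = 1 := by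
    rw [hpdef, ← Finset.sum_div]
    exact div_self hpos.ne'
  have hf0 (ω : Ω) : 0 ≤ f ω := div_nonneg (le_max_left _ _) (prEqNe_nonneg hC0 ω)
  have hf1 (ω : Ω) : f ω ≤ 1 := div_le_one_of_le₀ (hmax ω) (prEqNe_nonneg hC0 ω)
  have hpf (ω : Ω) : p ω * f ω = max 0 (P ω - Q ω) / N := by
    have hcancel : max 0 (P ω - Q ω) / prEqNe C ω * prEqNe C ω = max 0 (P ω - Q ω) :=
      div_mul_cancel_of_imp fun h => le_antisymm (h ▸ hmax ω) (le_max_left _ _)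
    rw [← hcancel, hf, hpdef]
    simp only [estF]
    ring
  have hmean : ∑ ω, p ω * f ω = μ := by
    simp only [hpf, ← Finset.sum_div]
    rw [← dTV_eq_sum_max P Q (hP1.trans hQ1.symm)]
  have hcentred : ∑ ω, p ω * (f ω - μ) = 0 := by
    simp only [mul_sub, Finset.sum_sub_distrib, ← Finset.sum_mul, hmean, hp1, one_mul, sub_self]
  have hvar : ∑ ω, p ω * (f ω - μ) ^ 2 ≤ μ := by
    calc ∑ ω, p ω * (f ω - μ) ^ 2
        = ∑ ω, (p ω * f ω ^ 2 - μ * (p ω * (f ω - μ)) - μ * (p ω * f ω)) :=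
          Finset.sum_congr rfl fun ω _ => by ring
      _ = ∑ ω, p ω * f ω ^ 2 - μ * μ := by
          simp only [Finset.sum_sub_distrib, ← Finset.mul_sum, hcentred, hmean, mul_zero, sub_zero]
      _ ≤ ∑ ω, p ω * f ω ^ 2 := sub_le_self _ (by positivity)
      _ ≤ ∑ ω, p ω * f ω := Finset.sum_le_sum fun ω _ =>
          mul_le_mul_of_nonneg_left (pow_le_of_le_one (hf0 ω) (hf1 ω) two_ne_zero) (hp0 ω)
      _ = μ := hmean
  have hsamples : 100 ≤ m * (μ * ε ^ 2) := by
    rw [div_le_iff₀ (by positivity)] at hm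
    exact hm.trans (by gcongr)
  refine le_trans ?_ (one_sub_le_sum_filter_prod p (fun ω => f ω - μ) hp0 hp1 hcentred m
    (t := ε * μ * m) (by positivity) _ fun w hw => ?_)
  · have hbound : m * (∑ ω, p ω * (f ω - μ) ^ 2) / (ε * μ * m) ^ 2 ≤ 1 / 100 := by
      rw [div_le_iff₀ (by positivity)]
      calc m * ∑ ω, p ω * (f ω - μ) ^ 2 ≤ m * μ := by gcongr
        _ = 1 / 100 * (m * μ) * 100 := by ring
        _ ≤ 1 / 100 * (m * μ) * (m * (μ * ε ^ 2)) := by gcongr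
        _ = 1 / 100 * (ε * μ * m) ^ 2 := by ring
    linarith
  · have hsum : ∑ i, (f (w i) - μ) = ∑ i, f (w i) - m * μ := by simp
    rw [hsum, abs_le] at hw
    rw [hdN, ← mul_assoc, ← mul_assoc, one_div, ← div_eq_inv_mul]
    refine ⟨mul_le_mul_of_nonneg_right ?_ hpos.le, mul_le_mul_of_nonneg_right ?_ hpos.le⟩
    · rw [le_div_iff₀ hm0]
      linarith
    · rw [div_le_iff₀ hm0]
      linarith
end
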